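/- arXiv:1902.01809 — 5 statements merged into one kernel-verified Lean document; each statement's English description precedes it below -/
import Mathlib

section
/- If T is a tree with maximum degree Δ, then A*(T) ≥ Δ(Δ² − 1). -/
/-!
Root the tree `T` at a vertex `r` of maximum degree `Δ`. Every edge joins a vertex `u ≠ r` to its
parent `p u`, so `A*(T) ≥ ∑_{u ≠ r} (d_{p u}² - d_u²) = ∑_{uv ∈ E} (d_u² + d_v²) - 2 ∑_{u ≠ r} d_u²`.
The first sum is `∑_u d_u³` by counting incidences, whence
`A*(T) ≥ Δ³ + ∑_{u ≠ r} d_u² (d_u - 2) ≥ Δ³ + ∑_{u ≠ r} (d_u - 2)`, using `d² (d - 2) ≥ d - 2` for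
every natural number `d`. In a tree the degrees sum to `2 (|V| - 1)`, so the last sum equals `-Δ`.
-/

open SimpleGraph Finset

/-- The modified Albertson index: `A*(G) = ∑_{uv ∈ E(G)} |d_u² − d_v²|`. -/
noncomputable def modAlbertson {V : Type*} [Fintype V] (G : SimpleGraph V) : ℤ := by
  classical
  exact ∑ e ∈ G.edgeFinset,
    Sym2.lift ⟨fun u v => |((G.degree u : ℤ)) ^ 2 - ((G.degree v : ℤ)) ^ 2|,
      fun u v => abs_sub_comm _ _⟩ e

/-- A connected graph has a parent function towards any root `r`: each vertex other than `r` has a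
neighbour strictly closer to `r`. -/
lemma exists_parent {V : Type*} {G : SimpleGraph V} (hG : G.Connected) (r : V) :
    ∃ p : V → V, ∀ u, u ≠ r → G.Adj u (p u) ∧ G.dist (p u) r < G.dist u r := by
  have h : ∀ u, ∃ w, u ≠ r → G.Adj u w ∧ G.dist w r < G.dist u r := by
    intro u
    obtain ⟨q, hq⟩ := hG.exists_walk_length_eq_dist u r
    cases q with
    | nil => exact ⟨r, fun h => absurd rfl h⟩
    | cons hadj q =>
      refine ⟨_, fun _ => ⟨hadj, ?_⟩⟩
      have := SimpleGraph.dist_le q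
      rw [SimpleGraph.Walk.length_cons] at hq
      omega
  choose p hp using h
  exact ⟨p, hp⟩

/-- In a tree, `u ↦ {u, p u}` enumerates the edges by the non-root vertices: it is injective because
parents are closer to the root, and surjective because both sides have `|V| - 1` elements. -/
lemma sum_edges_eq_sum_parent {V : Type*} [Fintype V] [DecidableEq V] {T : SimpleGraph V}
    [Fintype T.edgeSet] (hT : T.IsTree) {r : V} {p : V → V}
    (hp : ∀ u, u ≠ r → T.Adj u (p u) ∧ T.dist (p u) r < T.dist u r) (g : Sym2 V → ℤ) :
    ∑ e ∈ T.edgeFinset, g e = ∑ u ∈ univ.erase r, g s(u, p u) := by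
  have hinj : Set.InjOn (fun u => s(u, p u)) (univ.erase r : Finset V) := by
    intro a ha b hb hab
    have ha' := (hp a (by simpa using ha)).2
    have hb' := (hp b (by simpa using hb)).2
    rcases Sym2.eq_iff.1 hab with h | ⟨h1, h2⟩
    · exact h.1
    · rw [h2] at ha'
      rw [← h1] at hb'
      omega
  have himg : (univ.erase r).image (fun u => s(u, p u)) = T.edgeFinset := by
    apply Finset.eq_of_subset_of_card_le
    · intro e he
      obtain ⟨u, hu, rfl⟩ := Finset.mem_image.1 he
      simpa using (hp u (by simpa using hu)).1
    · rw [Finset.card_image_of_injOn hinj, Finset.card_erase_of_mem (Finset.mem_univ r),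
        Finset.card_univ, ← hT.card_edgeFinset]
      omega
  rw [← himg, Finset.sum_image hinj]

/-- Weighted handshaking: summing `f` over the endpoints of all edges counts each vertex with
multiplicity its degree. -/
lemma sum_edges_sum_endpoints {V : Type*} [Fintype V] [DecidableEq V] (G : SimpleGraph V)
    [DecidableRel G.Adj] (f : V → ℤ) :
    ∑ e ∈ G.edgeFinset, ∑ x, (if x ∈ e then f x else 0) = ∑ x, (G.degree x : ℤ) * f x := by
  rw [Finset.sum_comm]
  refine Finset.sum_congr rfl fun x _ => ?_
  rw [← Finset.sum_filter, Finset.sum_const, ← G.incidenceFinset_eq_filter x,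
    G.card_incidenceFinset_eq_degree, nsmul_eq_mul]

lemma sub_two_le_sq_mul_sub_two (d : ℕ) : (d : ℤ) - 2 ≤ (d : ℤ) ^ 2 * ((d : ℤ) - 2) := by
  rcases d with _ | _ | d
  · norm_num
  · norm_num
  · push_cast
    nlinarith [mul_nonneg (Int.natCast_nonneg d) (Int.natCast_nonneg d),
      mul_nonneg (mul_nonneg (Int.natCast_nonneg d) (Int.natCast_nonneg d)) (Int.natCast_nonneg d)]

/-- If `T` is a tree with maximum degree `Δ`, then `A*(T) ≥ Δ(Δ² − 1)`. -/
theorem modAlbertson_tree_lower_bound {V : Type*} [Fintype V] (T : SimpleGraph V)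
    [DecidableRel T.Adj] (hT : T.IsTree) :
    (T.maxDegree : ℤ) * ((T.maxDegree : ℤ) ^ 2 - 1) ≤ modAlbertson T := by
  classical
  have := hT.connected.nonempty
  obtain ⟨r, hr⟩ := T.exists_maximal_degree_vertex
  obtain ⟨p, hp⟩ := exists_parent hT.connected r
  have hA : modAlbertson T =
      ∑ u ∈ univ.erase r, |(T.degree u : ℤ) ^ 2 - (T.degree (p u) : ℤ) ^ 2| := by
    refine Eq.trans ?_ (sum_edges_eq_sum_parent hT hp (Sym2.lift
      ⟨fun u v => |((T.degree u : ℤ)) ^ 2 - ((T.degree v : ℤ)) ^ 2|, fun u v => abs_sub_comm _ _⟩))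
    unfold modAlbertson
    convert rfl
  have hcube : ∑ u ∈ univ.erase r, ((T.degree u : ℤ) ^ 2 + (T.degree (p u) : ℤ) ^ 2) =
      ∑ u, (T.degree u : ℤ) * (T.degree u : ℤ) ^ 2 := by
    rw [← sum_edges_sum_endpoints, sum_edges_eq_sum_parent hT hp]
    refine Finset.sum_congr rfl fun u hu => ?_
    have hne : u ≠ p u := (hp u (by simpa using hu)).1.ne
    have hfilter : (univ.filter fun x => x ∈ s(u, p u)) = {u, p u} := by
      ext x
      simp
    rw [← Finset.sum_filter, hfilter, Finset.sum_pair hne]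
  have hdeg : ∑ u, ((T.degree u : ℤ) - 2) = -2 := by
    have h1 := T.sum_degrees_eq_twice_card_edges
    have h2 := hT.card_edgeFinset
    rw [Finset.sum_sub_distrib, ← Nat.cast_sum, h1, Finset.sum_const, Finset.card_univ, ← h2]
    simp
    ring
  rw [← Finset.add_sum_erase _ _ (Finset.mem_univ r)] at hcube hdeg
  have hlow : ∑ u ∈ univ.erase r, (((T.degree u : ℤ) ^ 2 + (T.degree (p u) : ℤ) ^ 2)
      - (T.degree u : ℤ) * (T.degree u : ℤ) ^ 2 + ((T.degree u : ℤ) - 2)) ≤ modAlbertson T := by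
    rw [hA]
    refine Finset.sum_le_sum fun u _ => ?_
    have h1 := neg_le_abs ((T.degree u : ℤ) ^ 2 - (T.degree (p u) : ℤ) ^ 2)
    have h2 := sub_two_le_sq_mul_sub_two (T.degree u)
    linarith
  rw [Finset.sum_add_distrib, Finset.sum_sub_distrib] at hlow
  rw [hr]
  linarith
end

section
/- Let T be a tree with maximum degree Δ. Then A*(T) = Δ(Δ² − 1) if and only if T has at most one vertex of degree greater than 2 (i.e., T is a path or a tree containing exactly one vertex of degree greater than 2). -/
/-!
Root the tree `T` at a vertex `r` of maximum degree `Δ` and let `p v` be a neighbour of `v ≠ r`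
that is closer to `r`. The edges of `T` are exactly the pairs `s(v, p v)` with `v ≠ r`
(`exists_parent`). Hence every sum over edges is a sum over the vertices other than `r`; in
particular the double counting identity `∑ v, d v * g v = ∑ uv ∈ E, (g u + g v)` becomes
`∑ v, d v * g v = ∑ v ≠ r, (g v + g (p v))`. Taking `g = d ^ 2` and `g = 1` gives
(`modAlbertson_sub_eq_sum`)

`A*(T) - Δ (Δ² - 1)
  = ∑ v ≠ r, ((|d v² - d (p v)²| - (d (p v)² - d v²)) + (d v - 2) (d v² - 1))`.

Every summand is nonnegative because `d v ≥ 1`. If equality holds, all summands vanish, so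
`d v ≤ 2` for all `v ≠ r`. Conversely, if no vertex other than `r` has degree above `2`, then the
second part of each summand vanishes, and so does the first: degrees do not increase away from the
root, since `p v` is either `r`, of maximum degree, or a vertex with both a parent and a child,
hence of degree at least `2`.
-/

open SimpleGraph Finset

namespace ModAlbertson

variable {V : Type*} [Fintype V] [DecidableEq V] (T : SimpleGraph V) [DecidableRel T.Adj]

/-- In a tree rooted at `r` every other vertex has a parent, and the edges are in bijection with the
non-root vertices via `v ↦ s(v, p v)`. The bijection is recorded as reindexing of sums. -/
lemma exists_parent (hT : T.IsTree) (r : V) :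
    ∃ p : V → V, (∀ v, v ≠ r → T.Adj v (p v)) ∧ (∀ v, v ≠ r → p v ≠ r → p (p v) ≠ v) ∧
      ∀ f : Sym2 V → ℤ, ∑ e ∈ T.edgeFinset, f e = ∑ v ∈ univ.erase r, f s(v, p v) := by
  have hpar : ∀ v, ∃ w, v ≠ r → T.Adj v w ∧ T.dist w r < T.dist v r := by
    intro v
    by_cases hv : v = r
    · exact ⟨v, fun h => absurd hv h⟩
    obtain ⟨q, hq⟩ := hT.connected.exists_walk_length_eq_dist v r
    cases q with
    | nil => exact absurd rfl hv
    | @cons _ w _ h q =>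
      refine ⟨w, fun _ => ⟨h, ?_⟩⟩
      have := SimpleGraph.dist_le q
      rw [SimpleGraph.Walk.length_cons] at hq
      omega
  choose p hp using hpar
  have hpp : ∀ v, v ≠ r → p v ≠ r → p (p v) ≠ v := by
    intro v hv hpv h
    have h1 := (hp v hv).2
    have h2 := (hp _ hpv).2
    rw [h] at h2
    omega
  refine ⟨p, fun v hv => (hp v hv).1, hpp, fun f => ?_⟩
  have hinj : Set.InjOn (fun v => s(v, p v)) (univ.erase r : Finset V) := by
    intro v hv w hw h
    have hv' : v ≠ r := by simpa using hv
    have hw' : w ≠ r := by simpa using hw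
    rcases Sym2.eq_iff.1 h with h | ⟨h1, h2⟩
    · exact h.1
    · refine absurd ?_ (hpp v hv' (h2 ▸ hw'))
      rw [h2, ← h1]
  -- An injection into the edge set is onto, since a tree has one edge fewer than vertices.
  have himg : (univ.erase r).image (fun v => s(v, p v)) = T.edgeFinset := by
    apply Finset.eq_of_subset_of_card_le
    · intro e he
      obtain ⟨v, hv, rfl⟩ := Finset.mem_image.1 he
      simpa using (hp v (by simpa using hv)).1
    · rw [Finset.card_image_of_injOn hinj, Finset.card_erase_of_mem (mem_univ r), Finset.card_univ]
      have := hT.card_edgeFinset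
      omega
  rw [← himg, Finset.sum_image hinj]

/-- Double counting of incidences between vertices and edges, weighted by `g`. -/
lemma sum_degree_mul (g : V → ℤ) :
    ∑ v, (T.degree v : ℤ) * g v =
      ∑ e ∈ T.edgeFinset, ∑ v with v ∈ e, g v := by
  simp only [Finset.sum_filter]
  rw [Finset.sum_comm]
  refine Finset.sum_congr rfl fun v _ => ?_
  rw [← Finset.sum_filter, Finset.sum_const, nsmul_eq_mul, ← T.card_incidenceFinset_eq_degree,
    T.incidenceFinset_eq_filter]

lemma sum_mem_pair (g : V → ℤ) {a b : V} (h : a ≠ b) :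
    ∑ v with v ∈ s(a, b), g v = g a + g b := by
  rw [← Finset.sum_pair h]
  congr 1
  ext v
  simp

lemma modAlbertson_sub_eq_sum {r : V} {p : V → V} (hp : ∀ v, v ≠ r → T.Adj v (p v))
    (hsum : ∀ f : Sym2 V → ℤ, ∑ e ∈ T.edgeFinset, f e = ∑ v ∈ univ.erase r, f s(v, p v)) :
    modAlbertson T - (T.degree r : ℤ) * ((T.degree r : ℤ) ^ 2 - 1) =
      ∑ v ∈ univ.erase r,
        ((|(T.degree v : ℤ) ^ 2 - (T.degree (p v) : ℤ) ^ 2|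
            - ((T.degree (p v) : ℤ) ^ 2 - (T.degree v : ℤ) ^ 2))
          + ((T.degree v : ℤ) - 2) * ((T.degree v : ℤ) ^ 2 - 1)) := by
  have hA : modAlbertson T =
      ∑ v ∈ univ.erase r, |(T.degree v : ℤ) ^ 2 - (T.degree (p v) : ℤ) ^ 2| := by
    have := hsum (Sym2.lift ⟨fun u v => |((T.degree u : ℤ)) ^ 2 - ((T.degree v : ℤ)) ^ 2|,
      fun u v => abs_sub_comm _ _⟩)
    simp only [Sym2.lift_mk] at this
    rw [← this]
    unfold modAlbertson
    convert rfl
  have hcount : ∀ g : V → ℤ, (T.degree r : ℤ) * g r + ∑ v ∈ univ.erase r, (T.degree v : ℤ) * g v =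
      ∑ v ∈ univ.erase r, (g v + g (p v)) := by
    intro g
    rw [Finset.add_sum_erase _ (fun v => (T.degree v : ℤ) * g v) (mem_univ r), sum_degree_mul, hsum]
    refine Finset.sum_congr rfl fun v hv => sum_mem_pair g (hp v (by simpa using hv)).ne
  have h1 := hcount fun _ => 1
  have h2 := hcount fun v => (T.degree v : ℤ) ^ 2
  have h3 : ∀ v : V, ((T.degree v : ℤ) - 2) * ((T.degree v : ℤ) ^ 2 - 1) =
      (T.degree v : ℤ) * (T.degree v : ℤ) ^ 2 - (T.degree v : ℤ) * 1 -
      2 * (T.degree v : ℤ) ^ 2 + (1 + 1) := fun v => by ring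
  simp only [h3, Finset.sum_add_distrib, Finset.sum_sub_distrib, ← Finset.mul_sum, hA] at h1 h2 ⊢
  linarith

end ModAlbertson

open ModAlbertson

/-- For a tree `T` with maximum degree `Δ`, `A*(T) = Δ(Δ² − 1)` if and only if
`T` has at most one vertex of degree greater than `2`. -/
theorem modAlbertson_tree_eq_iff {V : Type*} [Fintype V] (T : SimpleGraph V)
    [DecidableRel T.Adj] (hT : T.IsTree) :
    modAlbertson T = (T.maxDegree : ℤ) * ((T.maxDegree : ℤ) ^ 2 - 1) ↔
      ({v : V | 2 < T.degree v} : Set V).Subsingleton := by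
  classical
  have := hT.connected.nonempty
  obtain ⟨r, hr⟩ := T.exists_maximal_degree_vertex
  obtain ⟨p, hp, hpp, hsum⟩ := exists_parent T hT r
  have hpos : ∀ v, v ≠ r → 1 ≤ T.degree v := fun v hv =>
    (T.degree_pos_iff_exists_adj v).2 ⟨_, hp v hv⟩
  have hfst : ∀ v, 0 ≤ |(T.degree v : ℤ) ^ 2 - (T.degree (p v) : ℤ) ^ 2|
      - ((T.degree (p v) : ℤ) ^ 2 - (T.degree v : ℤ) ^ 2) := fun v => by
    rw [abs_sub_comm]
    exact sub_nonneg.2 (le_abs_self _)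
  have hsnd : ∀ v, v ≠ r → 0 ≤ ((T.degree v : ℤ) - 2) * ((T.degree v : ℤ) ^ 2 - 1) := by
    intro v hv
    obtain h | h : T.degree v = 1 ∨ 2 ≤ T.degree v := by have := hpos v hv; omega
    · simp [h]
    · have h' : (2 : ℤ) ≤ T.degree v := by exact_mod_cast h
      exact mul_nonneg (by linarith) (by nlinarith)
  rw [hr, ← sub_eq_zero, modAlbertson_sub_eq_sum T hp hsum, Finset.sum_eq_zero_iff_of_nonneg
    fun v hv => add_nonneg (hfst v) (hsnd v (by simpa using hv))]
  constructor
  · intro h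
    have key : ∀ v, 2 < T.degree v → v = r := by
      intro v hv
      by_contra hvr
      have h0 := h v (by simpa using hvr)
      have h' : (2 : ℤ) < T.degree v := by exact_mod_cast hv
      have : 0 < ((T.degree v : ℤ) - 2) * ((T.degree v : ℤ) ^ 2 - 1) :=
        mul_pos (by linarith) (by nlinarith)
      linarith [hfst v]
    intro v hv w hw
    rw [key v hv, key w hw]
  · intro h v hv
    have hvr : v ≠ r := by simpa using hv
    have hle : ∀ w, T.degree w ≤ T.degree r := fun w => hr ▸ T.degree_le_maxDegree w
    have hv2 : T.degree v ≤ 2 := by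
      by_contra hlt
      push Not at hlt
      exact hvr (h hlt (lt_of_lt_of_le hlt (hle v)))
    have hmono : T.degree v ≤ T.degree (p v) := by
      by_cases hpr : p v = r
      · rw [hpr]
        exact hle v
      · -- `p v` has the two distinct neighbours `v` and `p (p v)`.
        refine hv2.trans ?_
        rw [← T.card_neighborFinset_eq_degree, ← Finset.card_pair (hpp v hvr hpr)]
        apply Finset.card_le_card
        intro w hw
        rcases Finset.mem_insert.1 hw with rfl | hw
        · simpa using hp _ hpr
        · rw [Finset.mem_singleton.1 hw]
          simpa using (hp v hvr).symm
    have hsq : (T.degree v : ℤ) ^ 2 ≤ (T.degree (p v) : ℤ) ^ 2 := by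
      exact_mod_cast Nat.pow_le_pow_left hmono 2
    have hz : ((T.degree v : ℤ) - 2) * ((T.degree v : ℤ) ^ 2 - 1) = 0 := by
      obtain h | h : T.degree v = 1 ∨ T.degree v = 2 := by have := hpos v hvr; omega
      all_goals simp [h]
    rw [hz, abs_of_nonpos (by linarith)]
    ring
end

section
/- For n ≥ 5, if T is an n-vertex tree that is not isomorphic to the path P_n, then A*(T) > A*(P_n), i.e., A*(T) > 6. -/
/-!
A tree that is not a path has a vertex `v` of degree at least `3`, and it has a leaf `u`. Along the
path from `u` to `v` the terms `|d_x² − d_y²|` sum, by the triangle inequality, to at least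
`d_v² − d_u² ≥ 9 − 1 = 8`; since a path uses each edge at most once, `A*(T) ≥ 8 > 6`.

The existence of `v` is `nonempty_iso_pathGraph`: if all degrees are at most `2`, the distance
from a leaf is injective (two vertices at the same distance would have distinct parents by
induction, as a common parent would have too many neighbours), so it identifies the tree with a
path.
-/


open SimpleGraph Finset

/-- The triangle inequality for `|f x - f y|` along a walk. -/
lemma abs_sub_le_sum_edges {V : Type*} {G : SimpleGraph V} (f : V → ℤ) {u v : V}
    (p : G.Walk u v) :
    |f u - f v| ≤ (p.edges.map
      (Sym2.lift ⟨fun x y => |f x - f y|, fun _ _ => abs_sub_comm _ _⟩)).sum := by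
  induction p with
  | nil => simp
  | @cons a b c h q ih =>
    simp only [Walk.edges_cons, List.map_cons, List.sum_cons, Sym2.lift_mk]
    exact (abs_sub_le (f a) (f b) (f c)).trans (by gcongr)

/-- The path between two vertices bounds the modified Albertson index from below. -/
lemma abs_sq_sub_sq_le_modAlbertson {V : Type*} [Fintype V] {G : SimpleGraph V}
    [DecidableRel G.Adj] (hG : G.Connected) (u v : V) :
    |(G.degree u : ℤ) ^ 2 - (G.degree v : ℤ) ^ 2| ≤ modAlbertson G := by
  classical
  obtain ⟨p, hp⟩ := hG.exists_isPath u v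
  refine (abs_sub_le_sum_edges (fun x => (G.degree x : ℤ) ^ 2) p).trans ?_
  rw [← List.sum_toFinset _ hp.isTrail.edges_nodup]
  unfold modAlbertson
  have hsub : p.edges.toFinset ⊆ G.edgeFinset := by
    intro e he
    exact mem_edgeFinset.2 (p.edges_subset_edgeSet (List.mem_toFinset.1 he))
  convert Finset.sum_le_sum_of_subset_of_nonneg hsub ?_ using 1
  · exact Finset.sum_congr (by ext; simp) fun e _ => by congr!
  · infer_instance
  · intro e _ _
    induction e with
    | _ x y => exact abs_nonneg _

/-- Every vertex other than `u` has a neighbour one step closer to `u`. -/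
lemma exists_adj_dist_eq {V : Type*} {G : SimpleGraph V} (hG : G.Connected) {u x : V} {k : ℕ}
    (h : G.dist u x = k + 1) : ∃ y, G.Adj x y ∧ G.dist u y = k := by
  obtain ⟨p, hp⟩ := hG.exists_walk_length_eq_dist x u
  rw [dist_comm, h] at hp
  cases p with
  | nil => simp at hp
  | @cons _ y _ hxy q =>
    refine ⟨y, hxy, ?_⟩
    have h1 := dist_le q
    have h2 := hG.dist_triangle (u := u) (v := y) (w := x)
    rw [dist_eq_one_iff_adj.2 hxy.symm] at h2
    rw [dist_comm] at h1
    simp only [Walk.length_cons] at hp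
    omega

/-- In a connected graph of maximum degree at most `2`, a vertex is determined by its distance
from a given leaf. -/
lemma dist_leaf_injective {V : Type*} [Fintype V] {G : SimpleGraph V} [DecidableRel G.Adj]
    (hG : G.Connected) (hdeg : ∀ v, G.degree v ≤ 2) {u : V} (hu : G.degree u = 1) :
    Function.Injective (G.dist u) := by
  classical
  suffices H : ∀ k v w, G.dist u v = k → G.dist u w = k → v = w from
    fun v w h => H _ v w rfl h.symm
  intro k
  induction k with
  | zero =>
    intro v w hv hw
    rw [hG.dist_eq_zero_iff] at hv hw
    exact hv.symm.trans hw
  | succ k ih =>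
    intro v w hv hw
    obtain ⟨x, hvx, hx⟩ := exists_adj_dist_eq hG hv
    obtain ⟨y, hwy, hy⟩ := exists_adj_dist_eq hG hw
    obtain rfl := ih x y hx hy
    by_contra hne
    cases k with
    | zero =>
      -- the common parent is the leaf itself, which has a single neighbour
      obtain rfl := hG.dist_eq_zero_iff.1 hx
      have hsub : ({v, w} : Finset V) ⊆ G.neighborFinset u := by
        intro z hz
        rw [mem_neighborFinset]
        rcases Finset.mem_insert.1 hz with rfl | hz
        · exact hvx.symm
        · exact (Finset.mem_singleton.1 hz) ▸ hwy.symm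
      have := Finset.card_le_card hsub
      rw [Finset.card_pair hne, card_neighborFinset_eq_degree] at this
      omega
    | succ k =>
      -- the common parent has its own parent as a third neighbour
      obtain ⟨t, hxt, ht⟩ := exists_adj_dist_eq hG hx
      have hvt : v ≠ t := by rintro rfl; omega
      have hwt : w ≠ t := by rintro rfl; omega
      have hsub : ({v, w, t} : Finset V) ⊆ G.neighborFinset x := by
        intro z hz
        rw [mem_neighborFinset]
        simp only [Finset.mem_insert, Finset.mem_singleton] at hz
        rcases hz with rfl | rfl | rfl
        exacts [hvx.symm, hwy.symm, hxt]
      have := Finset.card_le_card hsub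
      rw [Finset.card_eq_three.2 ⟨v, w, t, hne, hvt, hwt, rfl⟩,
        card_neighborFinset_eq_degree] at this
      have := hdeg x
      omega

/-- A tree of maximum degree at most `2` is a path; the isomorphism sends a vertex to its distance
from a fixed leaf. -/
lemma nonempty_iso_pathGraph {V : Type*} [Fintype V] {T : SimpleGraph V} [DecidableRel T.Adj]
    (hT : T.IsTree) (hdeg : ∀ v, T.degree v ≤ 2) {u : V} (hu : T.degree u = 1) :
    Nonempty (T ≃g SimpleGraph.pathGraph (Fintype.card V)) := by
  have hG := hT.connected
  have hinj := dist_leaf_injective hG hdeg hu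
  have hlt : ∀ v, T.dist u v < Fintype.card V := by
    intro v
    obtain ⟨p, hp, hl⟩ := hG.exists_path_of_dist u v
    exact hl ▸ hp.length_lt
  let f : V → Fin (Fintype.card V) := fun v => ⟨T.dist u v, hlt v⟩
  have hf : Function.Bijective f := by
    rw [Fintype.bijective_iff_injective_and_card]
    exact ⟨fun v w h => hinj (congrArg Fin.val h), by simp⟩
  have key : ∀ v w, T.dist u v + 1 = T.dist u w → T.Adj v w := by
    intro v w h
    obtain ⟨y, hwy, hy⟩ := exists_adj_dist_eq hG h.symm
    exact hinj hy ▸ hwy.symm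
  refine ⟨⟨Equiv.ofBijective f hf, ?_⟩⟩
  intro v w
  rw [pathGraph_adj]
  constructor
  · rintro (h | h)
    · exact key v w h
    · exact (key w v h).symm
  · intro h
    rcases hT.dist_eq_dist_add_one_of_adj u h with h | h
    · exact Or.inr h.symm
    · exact Or.inl h.symm

/-- For `n ≥ 5`, every `n`-vertex tree not isomorphic to the path `Pₙ`
satisfies `A*(T) > 6 = A*(Pₙ)`. -/
theorem modAlbertson_gt_path {V : Type*} [Fintype V] (T : SimpleGraph V)
    (n : ℕ) (hn : 5 ≤ n) (hcard : Fintype.card V = n) (hT : T.IsTree)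
    (hnp : IsEmpty (T ≃g SimpleGraph.pathGraph n)) :
    6 < modAlbertson T := by
  classical
  subst hcard
  have : Nontrivial V := Fintype.one_lt_card_iff_nontrivial.1 (by omega)
  obtain ⟨u, hu⟩ := hT.exists_vert_degree_one_of_nontrivial
  obtain ⟨v, hv⟩ : ∃ v, 3 ≤ T.degree v := by
    by_contra! h
    exact (not_isEmpty_iff.2
      (nonempty_iso_pathGraph hT (fun v => Nat.lt_succ_iff.1 (h v)) hu)) hnp
  have h1 := abs_sq_sub_sq_le_modAlbertson hT.connected v u
  have h2 := le_abs_self ((T.degree v : ℤ) ^ 2 - (T.degree u : ℤ) ^ 2)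
  have h3 : (3 : ℤ) ≤ T.degree v := by exact_mod_cast hv
  rw [hu] at h1 h2
  push_cast at h1 h2
  nlinarith
end

section
/- Let u and v be non-adjacent vertices of a finite simple graph G with d_u ≥ d_v, and let G + uv denote the graph obtained from G by adding the edge uv. Then A*(G + uv) + 2[(2d_u + 1)·g_u + (2d_v + 1)·g_v] = A*(G) + 3d_u(d_u + 1) + d_v(d_v − 1), where g_u (respectively g_v) is the number of neighbors of u (respectively v) in G whose degree in G is strictly greater than d_u (respectively d_v), and all degrees are taken in G. -/
/-!
Adding `uv` raises the degrees of `u` and `v` by one and leaves all other degrees unchanged, so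
among the old edges only those at `u` or at `v` change their weight. Since `u` and `v` are not
adjacent, the edges at `u` and those at `v` are disjoint families, indexed by the neighbors of `u`
and of `v` (`sum_edgeFinset_eq_of_support`), and the other endpoint of such an edge keeps its
degree. For an edge `ux` the weight drops by `2d_u + 1` if `d_x > d_u` and grows by `2d_u + 1`
otherwise, which adds up to `(2d_u + 1)(d_u - 2g_u)` (`sum_neighbor_change`); likewise at `v`.
The new edge contributes `(d_u + 1)² - (d_v + 1)²`, and the identity follows.
-/

open SimpleGraph Finset

/-- The weight `|d_x² − d_y²|` of the unordered pair `xy`, for an arbitrary integer-valued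
function `d` in place of the degree. -/
def pairWeight {V : Type*} (d : V → ℤ) : Sym2 V → ℤ :=
  Sym2.lift ⟨fun x y => |d x ^ 2 - d y ^ 2|, fun _ _ => abs_sub_comm _ _⟩

@[simp] lemma pairWeight_mk {V : Type*} (d : V → ℤ) (x y : V) :
    pairWeight d s(x, y) = |d x ^ 2 - d y ^ 2| := rfl

/-- `modAlbertson`, which is defined with classical instances, computed with arbitrary ones. -/
lemma modAlbertson_eq {V : Type*} [Fintype V] (G : SimpleGraph V) [DecidableRel G.Adj]
    [Fintype G.edgeSet] :
    modAlbertson G = ∑ e ∈ G.edgeFinset, pairWeight (fun x => (G.degree x : ℤ)) e := by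
  unfold modAlbertson pairWeight
  dsimp only
  congr!

/-- A function on pairs that vanishes on the pairs avoiding both of two non-adjacent vertices `u`
and `v` is summed over the edges by summing over the neighbors of `u` and those of `v`. -/
lemma sum_edgeFinset_eq_of_support {V : Type*} [Fintype V] [DecidableEq V]
    (G : SimpleGraph V) [DecidableRel G.Adj] {u v : V} (huv : u ≠ v)
    (hadj : ¬ G.Adj u v) (D : Sym2 V → ℤ)
    (hD : ∀ x y, x ≠ u → x ≠ v → y ≠ u → y ≠ v → D s(x, y) = 0) :
    ∑ e ∈ G.edgeFinset, D e
      = ∑ x ∈ G.neighborFinset u, D s(u, x) + ∑ x ∈ G.neighborFinset v, D s(v, x) := by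
  have inj : ∀ w : V, Function.Injective fun x : V => s(w, x) := fun w x y h => by
    exact Sym2.congr_right.1 h
  rw [← Finset.sum_image (f := D) (inj u).injOn, ← Finset.sum_image (f := D) (inj v).injOn,
    ← Finset.sum_union]
  · symm
    apply Finset.sum_subset
    · intro e he
      simp only [Finset.mem_union, Finset.mem_image, mem_neighborFinset] at he
      rcases he with ⟨x, hx, rfl⟩ | ⟨x, hx, rfl⟩ <;> simpa using hx
    · intro e
      induction e using Sym2.ind with
      | _ x y =>
        intro he hn
        rw [mem_edgeFinset, mem_edgeSet] at he
        simp only [Finset.mem_union, Finset.mem_image, mem_neighborFinset, not_or] at hn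
        apply hD
        · rintro rfl
          exact hn.1 ⟨y, he, rfl⟩
        · rintro rfl
          exact hn.2 ⟨y, he, rfl⟩
        · rintro rfl
          exact hn.1 ⟨x, he.symm, Sym2.eq_swap⟩
        · rintro rfl
          exact hn.2 ⟨x, he.symm, Sym2.eq_swap⟩
  · rw [Finset.disjoint_left]
    intro e he he'
    simp only [Finset.mem_image, mem_neighborFinset] at he he'
    obtain ⟨x, hx, rfl⟩ := he
    obtain ⟨y, hy, h⟩ := he'
    rcases Sym2.eq_iff.1 h with ⟨h1, -⟩ | ⟨h1, -⟩
    · exact huv h1.symm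
    · exact hadj (h1 ▸ hx)

lemma degree_sup_edge_left {V : Type*} [Fintype V] [DecidableEq V]
    (G : SimpleGraph V) [DecidableRel G.Adj] {u v : V} (huv : u ≠ v) (hadj : ¬ G.Adj u v)
    [DecidableRel (G ⊔ edge u v).Adj] :
    (G ⊔ edge u v).degree u = G.degree u + 1 := by
  have : (G ⊔ edge u v).neighborFinset u = insert v (G.neighborFinset u) := by
    ext x
    simp only [mem_neighborFinset, sup_adj, edge_adj, Finset.mem_insert]
    grind
  rw [← card_neighborFinset_eq_degree, this, Finset.card_insert_of_notMem (by simpa using hadj),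
    card_neighborFinset_eq_degree]

lemma degree_sup_edge_right {V : Type*} [Fintype V] [DecidableEq V]
    (G : SimpleGraph V) [DecidableRel G.Adj] {u v : V} (huv : u ≠ v) (hadj : ¬ G.Adj u v)
    [DecidableRel (G ⊔ edge u v).Adj] :
    (G ⊔ edge u v).degree v = G.degree v + 1 := by
  have : (G ⊔ edge u v).neighborFinset v = insert u (G.neighborFinset v) := by
    ext x
    simp only [mem_neighborFinset, sup_adj, edge_adj, Finset.mem_insert]
    grind
  rw [← card_neighborFinset_eq_degree, this,
    Finset.card_insert_of_notMem (by simpa [G.adj_comm] using hadj),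
    card_neighborFinset_eq_degree]

lemma degree_sup_edge_of_ne {V : Type*} [Fintype V] [DecidableEq V]
    (G : SimpleGraph V) [DecidableRel G.Adj] {u v x : V} (hu : x ≠ u) (hv : x ≠ v)
    [DecidableRel (G ⊔ edge u v).Adj] :
    (G ⊔ edge u v).degree x = G.degree x := by
  have : (G ⊔ edge u v).neighborFinset x = G.neighborFinset x := by
    ext y
    simp [edge_adj, hu, hv]
  rw [← card_neighborFinset_eq_degree, this, card_neighborFinset_eq_degree]

/-- The total change of weight of the edges at `w` when the degree of `w` grows by one and the
degrees of its neighbors stay the same. -/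
lemma sum_neighbor_change {V : Type*} [Fintype V] (G : SimpleGraph V) [DecidableRel G.Adj]
    (w : V) :
    ∑ x ∈ G.neighborFinset w, (|((G.degree w : ℤ) + 1) ^ 2 - (G.degree x : ℤ) ^ 2|
        - |(G.degree w : ℤ) ^ 2 - (G.degree x : ℤ) ^ 2|)
      = (2 * (G.degree w : ℤ) + 1) * ((G.degree w : ℤ)
        - 2 * (((G.neighborFinset w).filter fun x => G.degree w < G.degree x).card : ℤ)) := by
  have key : ∀ x ∈ G.neighborFinset w, |((G.degree w : ℤ) + 1) ^ 2 - (G.degree x : ℤ) ^ 2|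
        - |(G.degree w : ℤ) ^ 2 - (G.degree x : ℤ) ^ 2|
      = (2 * (G.degree w : ℤ) + 1) * (1 - 2 * if G.degree w < G.degree x then 1 else 0) := by
    intro x _
    split_ifs with h
    · have h' : (G.degree w : ℤ) + 1 ≤ G.degree x := by exact_mod_cast h
      rw [abs_of_nonpos (by nlinarith), abs_of_nonpos (by nlinarith)]
      ring
    · have h' : (G.degree x : ℤ) ≤ G.degree w := by exact_mod_cast not_lt.1 h
      rw [abs_of_nonneg (by nlinarith), abs_of_nonneg (by nlinarith)]
      ring
  rw [Finset.sum_congr rfl key, ← Finset.mul_sum, Finset.sum_sub_distrib, ← Finset.mul_sum,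
    Finset.sum_boole]
  simp

/-- Adding an edge `uv` between non-adjacent vertices with `d_u ≥ d_v`:
`A*(G + uv) + 2[(2d_u + 1)g_u + (2d_v + 1)g_v] = A*(G) + 3d_u(d_u + 1) + d_v(d_v − 1)`,
where `g_u` counts the neighbors of `u` in `G` of degree strictly greater than `d_u`. -/
theorem modAlbertson_addEdge {V : Type*} [Fintype V] [DecidableEq V]
    (G : SimpleGraph V) [DecidableRel G.Adj] (u v : V) (huv : u ≠ v)
    (hadj : ¬ G.Adj u v) (hdeg : G.degree v ≤ G.degree u) :
    modAlbertson (G ⊔ SimpleGraph.fromEdgeSet {s(u, v)})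
        + 2 * ((2 * (G.degree u : ℤ) + 1)
                * (((G.neighborFinset u).filter fun x => G.degree u < G.degree x).card : ℤ)
             + (2 * (G.degree v : ℤ) + 1)
                * (((G.neighborFinset v).filter fun x => G.degree v < G.degree x).card : ℤ))
      = modAlbertson G + 3 * (G.degree u : ℤ) * ((G.degree u : ℤ) + 1)
          + (G.degree v : ℤ) * ((G.degree v : ℤ) - 1) := by
  classical
  change modAlbertson (G ⊔ edge u v) + _ = _
  rw [modAlbertson_eq (G ⊔ edge u v), modAlbertson_eq G, edgeFinset_sup_edge _ hadj huv,
    Finset.sum_cons]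
  have hu := degree_sup_edge_left G huv hadj
  have hv := degree_sup_edge_right G huv hadj
  have change := sum_edgeFinset_eq_of_support G huv hadj
    (fun e => pairWeight (fun x => ((G ⊔ edge u v).degree x : ℤ)) e
      - pairWeight (fun x => (G.degree x : ℤ)) e) (by
        intro x y hxu hxv hyu hyv
        simp [degree_sup_edge_of_ne G hxu hxv, degree_sup_edge_of_ne G hyu hyv])
  have changeU : ∀ x ∈ G.neighborFinset u,
      pairWeight (fun x => ((G ⊔ edge u v).degree x : ℤ)) s(u, x)
        - pairWeight (fun x => (G.degree x : ℤ)) s(u, x)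
      = |((G.degree u : ℤ) + 1) ^ 2 - (G.degree x : ℤ) ^ 2|
        - |(G.degree u : ℤ) ^ 2 - (G.degree x : ℤ) ^ 2| := by
    intro x hx
    rw [mem_neighborFinset] at hx
    have hxv : x ≠ v := by
      rintro rfl
      exact hadj hx
    simp [hu, degree_sup_edge_of_ne G hx.ne' hxv]
  have changeV : ∀ x ∈ G.neighborFinset v,
      pairWeight (fun x => ((G ⊔ edge u v).degree x : ℤ)) s(v, x)
        - pairWeight (fun x => (G.degree x : ℤ)) s(v, x)
      = |((G.degree v : ℤ) + 1) ^ 2 - (G.degree x : ℤ) ^ 2|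
        - |(G.degree v : ℤ) ^ 2 - (G.degree x : ℤ) ^ 2| := by
    intro x hx
    rw [mem_neighborFinset] at hx
    have hxu : x ≠ u := by
      rintro rfl
      exact hadj hx.symm
    simp [hv, degree_sup_edge_of_ne G hxu hx.ne']
  rw [Finset.sum_sub_distrib, Finset.sum_congr rfl changeU, Finset.sum_congr rfl changeV,
    sum_neighbor_change, sum_neighbor_change] at change
  have newEdge : pairWeight (fun x => ((G ⊔ edge u v).degree x : ℤ)) s(u, v)
      = ((G.degree u : ℤ) + 1) ^ 2 - ((G.degree v : ℤ) + 1) ^ 2 := by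
    have h' : (G.degree v : ℤ) ≤ G.degree u := by exact_mod_cast hdeg
    rw [pairWeight_mk, hu, hv]
    push_cast
    exact abs_of_nonneg (by nlinarith)
  rw [newEdge]
  linear_combination change
end

section
/- For every integer t ∈ {0, 3, 4, 5} ∪ {8, 9, 10, …}, there exist infinitely many (pairwise non-isomorphic) finite connected simple graphs G with A*(G) = 2t; equivalently, for every such t and every natural number N there exists a finite connected simple graph G with more than N vertices such that A*(G) = 2t. -/
/-!
Vertices of equal degree contribute nothing to `A*`, so a graph can be enlarged in the middle of
an edge `uv` whose ends have the same degree `d`: delete `uv` and bridge the gap by a connected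
gadget `H`, joining `u` to a vertex `a` of `H` and `v` to a vertex `b` of `H` (`splice`). All old
degrees survive, hence `A*` grows by an amount that depends only on `d` and the gadget
(`modAlbertson_splice`); if `a` has degree `d` afterwards, then `ua` is again an edge with both
ends of degree `d` and the operation can be repeated (`Good.insert`).

For `d = 2`, starting from a path on four vertices (`A* = 6`) and inserting single vertices, which
is free, gives longer and longer paths and settles `t = 3`. For `d = 3`, starting from `K₄`
(`A* = 0`), inserting `K₄` minus an edge is free and makes the graph arbitrarily large
(`good_three_zero`), while other gadgets raise `t = A* / 2` by `4`, `5` and `11`. Every remaining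
admissible `t` is of the form `4i + 5j`, except `t = 11`, for which the last gadget is used.
-/

open SimpleGraph Finset

/-! ### Sums over ordered pairs -/

/-- Summing over ordered pairs counts every edge twice. -/
lemma two_mul_modAlbertson {V : Type*} [Fintype V] (G : SimpleGraph V) [DecidableRel G.Adj] :
    2 * modAlbertson G = ∑ x, ∑ y, if G.Adj x y then
      |((G.degree x : ℤ)) ^ 2 - ((G.degree y : ℤ)) ^ 2| else 0 := by
  classical
  set f : Sym2 V → ℤ := Sym2.lift
    ⟨fun u v => |((G.degree u : ℤ)) ^ 2 - ((G.degree v : ℤ)) ^ 2|,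
      fun u v => abs_sub_comm _ _⟩ with hf
  have h0 : modAlbertson G = ∑ e ∈ G.edgeFinset, f e := by
    unfold modAlbertson
    rw [hf]
    congr!
  have h1 : ∑ d : G.Dart, f d.edge = 2 * ∑ e ∈ G.edgeFinset, f e := by
    rw [← Finset.sum_fiberwise_of_maps_to (s := univ) (t := G.edgeFinset)
      (g := fun d : G.Dart => d.edge) (fun d _ => by simp [d.edge_mem]), Finset.mul_sum]
    refine Finset.sum_congr rfl fun e he => ?_
    rw [Finset.sum_congr rfl (g := fun _ => f e) (fun d hd => by rw [(mem_filter.1 hd).2]),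
      Finset.sum_const, G.dart_edge_fiber_card e (by simpa using he)]
    simp
  rw [h0, ← h1, ← Finset.sum_product', ← Finset.sum_filter]
  refine Finset.sum_bij (fun d _ => d.toProd) ?_ ?_ ?_ ?_
  · intro d _
    simp
  · intro d _ e _ h
    exact SimpleGraph.Dart.ext _ _ h
  · intro p hp
    exact ⟨⟨p, by simpa using hp⟩, mem_univ _, rfl⟩
  · intro d _
    rfl

lemma degree_eq_sum {V : Type*} [Fintype V] (G : SimpleGraph V) [DecidableRel G.Adj] (x : V) :
    (G.degree x : ℤ) = ∑ y, if G.Adj x y then 1 else 0 := by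
  rw [← card_neighborFinset_eq_degree, neighborFinset_eq_filter]
  simp

/-- A finite criterion for connectedness that `decide` can check: every nonzero vertex has a smaller
neighbour. -/
lemma connected_of_pred {m : ℕ} (H : SimpleGraph (Fin (m + 1)))
    (h : ∀ w, w ≠ 0 → ∃ w' < w, H.Adj w w') : H.Connected := by
  have h0 : ∀ w, H.Reachable w 0 := by
    intro w
    induction w using WellFoundedLT.induction with
    | ind w ih =>
      by_cases hw : w = 0
      · rw [hw]
      · obtain ⟨w', hlt, hadj⟩ := h w hw
        exact hadj.reachable.trans (ih w' hlt)
  exact { preconnected := fun x y => (h0 x).trans (h0 y).symm, nonempty := ⟨0⟩ }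

/-! ### Splicing a gadget into an edge -/

/-- The graph obtained from `G` by deleting the pair `uv` and bridging the gap with `H`: `u` is
joined to `a` and `v` to `b`. The vertices `a` and `b` may coincide. -/
def splice {V W : Type} (G : SimpleGraph V) (H : SimpleGraph W) (u v : V) (a b : W) :
    SimpleGraph (V ⊕ W) where
  Adj
    | .inl x, .inl y => G.Adj x y ∧ ¬ (x = u ∧ y = v) ∧ ¬ (x = v ∧ y = u)
    | .inr w, .inr z => H.Adj w z
    | .inl x, .inr w => (x = u ∧ w = a) ∨ (x = v ∧ w = b)
    | .inr w, .inl x => (x = u ∧ w = a) ∨ (x = v ∧ w = b)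
  symm := ⟨by
    rintro (x | w) (y | z) h
    · exact ⟨h.1.symm, fun k => h.2.2 k.symm, fun k => h.2.1 k.symm⟩
    · exact h
    · exact h
    · exact H.symm.symm _ _ h⟩
  loopless := ⟨by
    rintro (x | w) h
    · exact G.loopless.irrefl x h.1
    · exact H.loopless.irrefl w h⟩

section splice

variable {V W : Type} {G : SimpleGraph V} {H : SimpleGraph W} {u v : V} {a b : W}

/-- The path from `u` through `H` to `v` replaces the deleted edge. -/
lemma splice_connected (hG : G.Connected) (hH : H.Connected) :
    (splice G H u v a b).Connected := by
  have hu : (splice G H u v a b).Reachable (.inl u) (.inr a) :=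
    Adj.reachable (Or.inl ⟨rfl, rfl⟩)
  have hv : (splice G H u v a b).Reachable (.inr b) (.inl v) :=
    Adj.reachable (Or.inr ⟨rfl, rfl⟩)
  have hW : ∀ w z, (splice G H u v a b).Reachable (.inr w) (.inr z) := fun w z =>
    (hH.preconnected w z).map (⟨Sum.inr, fun h => h⟩ : H →g splice G H u v a b)
  have huv := (hu.trans (hW a b)).trans hv
  have hstep : ∀ x y, G.Adj x y → (splice G H u v a b).Reachable (.inl x) (.inl y) := by
    intro x y h
    by_cases h1 : x = u ∧ y = v
    · obtain ⟨rfl, rfl⟩ := h1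
      exact huv
    by_cases h2 : x = v ∧ y = u
    · obtain ⟨rfl, rfl⟩ := h2
      exact huv.symm
    exact Adj.reachable ⟨h, h1, h2⟩
  have hV : ∀ x y, (splice G H u v a b).Reachable (.inl x) (.inl y) := by
    intro x y
    obtain ⟨p⟩ := hG.preconnected x y
    induction p with
    | nil => exact .rfl
    | cons h _ ih => exact (hstep _ _ h).trans ih
  have h0 : ∀ x, (splice G H u v a b).Reachable x (.inl u) := by
    rintro (x | w)
    · exact hV x u
    · exact (hW w a).trans hu.symm
  exact { preconnected := fun x y => (h0 x).trans (h0 y).symm, nonempty := ⟨.inl u⟩ }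

open scoped Classical in
/-- Neighbour sums at an old vertex: `u` trades its neighbour `v` for `a`, and `v` trades `u`
for `b`. -/
lemma sum_splice_inl [Fintype V] [Fintype W] (huv : G.Adj u v) (x : V) (f : V ⊕ W → ℤ) :
    (∑ y, if (splice G H u v a b).Adj (.inl x) y then f y else 0) =
      (∑ y, if G.Adj x y then f (.inl y) else 0)
        + (if x = u then f (.inr a) - f (.inl v) else 0)
        + (if x = v then f (.inr b) - f (.inl u) else 0) := by
  have hne := huv.ne
  have h1 : ∀ y, (if (splice G H u v a b).Adj (.inl x) (.inl y) then f (.inl y) else 0) =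
      (if G.Adj x y then f (.inl y) else 0) - (if y = v then if x = u then f (.inl v) else 0 else 0)
        - (if y = u then if x = v then f (.inl u) else 0 else 0) := by
    intro y
    have hadj : (splice G H u v a b).Adj (.inl x) (.inl y) ↔
      G.Adj x y ∧ ¬ (x = u ∧ y = v) ∧ ¬ (x = v ∧ y = u) := Iff.rfl
    simp only [hadj]
    have := huv.symm
    split_ifs <;> grind
  have h2 : ∀ w, (if (splice G H u v a b).Adj (.inl x) (.inr w) then f (.inr w) else 0) =
      (if w = a then if x = u then f (.inr a) else 0 else 0)
        + (if w = b then if x = v then f (.inr b) else 0 else 0) := by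
    intro w
    have hadj : (splice G H u v a b).Adj (.inl x) (.inr w) ↔
      (x = u ∧ w = a) ∨ (x = v ∧ w = b) := Iff.rfl
    simp only [hadj]
    split_ifs <;> grind
  rw [Fintype.sum_sum_type]
  simp only [h1, h2, Finset.sum_add_distrib, Finset.sum_sub_distrib, Finset.sum_ite_eq',
    Finset.mem_univ, if_true]
  split_ifs <;> grind

open scoped Classical in
lemma sum_splice_inr [Fintype V] [Fintype W] [DecidableRel H.Adj] (huv : G.Adj u v) (w : W)
    (f : V ⊕ W → ℤ) :
    (∑ y, if (splice G H u v a b).Adj (.inr w) y then f y else 0) =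
      (∑ z, if H.Adj w z then f (.inr z) else 0)
        + (if w = a then f (.inl u) else 0) + (if w = b then f (.inl v) else 0) := by
  have hne := huv.ne
  have h2 : ∀ x, (if (splice G H u v a b).Adj (.inr w) (.inl x) then f (.inl x) else 0) =
      (if x = u then if w = a then f (.inl u) else 0 else 0)
        + (if x = v then if w = b then f (.inl v) else 0 else 0) := by
    intro x
    have hadj : (splice G H u v a b).Adj (.inr w) (.inl x) ↔
      (x = u ∧ w = a) ∨ (x = v ∧ w = b) := Iff.rfl
    simp only [hadj]
    split_ifs <;> grind
  rw [Fintype.sum_sum_type]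
  simp only [h2, Finset.sum_add_distrib, Finset.sum_ite_eq', Finset.mem_univ, if_true]
  have h3 : (∑ z, if (splice G H u v a b).Adj (.inr w) (.inr z) then f (.inr z) else 0) =
      ∑ z, if H.Adj w z then f (.inr z) else 0 :=
    Finset.sum_congr rfl fun z _ => if_congr Iff.rfl rfl rfl
  rw [h3]
  ring

open scoped Classical in
lemma degree_splice_inl [Fintype V] [Fintype W] (huv : G.Adj u v) (x : V) :
    ((splice G H u v a b).degree (.inl x) : ℤ) = G.degree x := by
  rw [degree_eq_sum, degree_eq_sum, sum_splice_inl huv x (fun _ => 1)]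
  simp

open scoped Classical in
lemma degree_splice_inr [Fintype V] [Fintype W] [DecidableRel H.Adj] (huv : G.Adj u v) (w : W) :
    ((splice G H u v a b).degree (.inr w) : ℤ) =
      H.degree w + (if w = a then 1 else 0) + (if w = b then 1 else 0) := by
  rw [degree_eq_sum, degree_eq_sum, sum_splice_inr huv w (fun _ => 1)]

open scoped Classical in
/-- The growth of `A*` under splicing at an edge with both ends of degree `d`, where `D` gives the
degrees of the vertices of `H` in the spliced graph. The deleted edge contributed `0`. -/
lemma modAlbertson_splice [Fintype V] [Fintype W] [DecidableRel H.Adj] (huv : G.Adj u v) (d : ℤ)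
    (hu : (G.degree u : ℤ) = d) (hv : (G.degree v : ℤ) = d) (D : W → ℤ)
    (hD : ∀ w, D w = H.degree w + (if w = a then 1 else 0) + (if w = b then 1 else 0)) :
    2 * modAlbertson (splice G H u v a b) = 2 * modAlbertson G
      + (∑ w, ∑ z, if H.Adj w z then |D w ^ 2 - D z ^ 2| else 0)
      + 2 * (|D a ^ 2 - d ^ 2| + |D b ^ 2 - d ^ 2|) := by
  rw [two_mul_modAlbertson, two_mul_modAlbertson, Fintype.sum_sum_type]
  have hdeg : ∀ w : W, ((splice G H u v a b).degree (.inr w) : ℤ) = D w := fun w => by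
    rw [degree_splice_inr huv, hD]
  have hl : ∀ x : V, (∑ y, if (splice G H u v a b).Adj (.inl x) y then
      |((splice G H u v a b).degree (.inl x) : ℤ) ^ 2 -
        ((splice G H u v a b).degree y : ℤ) ^ 2| else 0) =
      (∑ y, if G.Adj x y then |(G.degree x : ℤ) ^ 2 - (G.degree y : ℤ) ^ 2| else 0)
        + (if x = u then |D a ^ 2 - d ^ 2| else 0) + (if x = v then |D b ^ 2 - d ^ 2| else 0) := by
    intro x
    rw [sum_splice_inl huv x (fun y => |((splice G H u v a b).degree (.inl x) : ℤ) ^ 2 -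
        ((splice G H u v a b).degree y : ℤ) ^ 2|)]
    simp only [degree_splice_inl huv, hdeg, hu, hv]
    have hxu : (if x = u then |(G.degree x : ℤ) ^ 2 - D a ^ 2| - |(G.degree x : ℤ) ^ 2 - d ^ 2|
        else 0) = if x = u then |D a ^ 2 - d ^ 2| else 0 := by
      split_ifs with h
      · rw [h, hu, sub_self, abs_zero, sub_zero, abs_sub_comm]
      · rfl
    have hxv : (if x = v then |(G.degree x : ℤ) ^ 2 - D b ^ 2| - |(G.degree x : ℤ) ^ 2 - d ^ 2|
        else 0) = if x = v then |D b ^ 2 - d ^ 2| else 0 := by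
      split_ifs with h
      · rw [h, hv, sub_self, abs_zero, sub_zero, abs_sub_comm]
      · rfl
    rw [hxu, hxv]
  have hr : ∀ w : W, (∑ y, if (splice G H u v a b).Adj (.inr w) y then
      |((splice G H u v a b).degree (.inr w) : ℤ) ^ 2 -
        ((splice G H u v a b).degree y : ℤ) ^ 2| else 0) =
      (∑ z, if H.Adj w z then |D w ^ 2 - D z ^ 2| else 0)
        + (if w = a then |D a ^ 2 - d ^ 2| else 0) + (if w = b then |D b ^ 2 - d ^ 2| else 0) := by
    intro w
    rw [sum_splice_inr huv w (fun y => |((splice G H u v a b).degree (.inr w) : ℤ) ^ 2 -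
        ((splice G H u v a b).degree y : ℤ) ^ 2|)]
    simp only [degree_splice_inl huv, hdeg, hu, hv]
    split_ifs <;> simp_all
  simp only [hl, hr, Finset.sum_add_distrib, Finset.sum_ite_eq', Finset.mem_univ, if_true]
  ring

end splice

/-! ### Repeated insertion of gadgets -/

open scoped Classical in
/-- Some connected graph on more than `N` vertices has `A* = 2t` and an edge with both ends of
degree `d`, at which further gadgets can be inserted. -/
def Good (d N : ℕ) (t : ℤ) : Prop :=
  ∃ (V : Type) (_ : Fintype V) (G : SimpleGraph V) (u v : V),
    G.Connected ∧ N < Fintype.card V ∧ modAlbertson G = 2 * t ∧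
      G.Adj u v ∧ G.degree u = d ∧ G.degree v = d

/-- The graph on `Fin m` with the given list of edges; the orientation of the pairs is
irrelevant. -/
def edges {m : ℕ} (l : List (Fin m × Fin m)) : SimpleGraph (Fin m) :=
  SimpleGraph.fromRel fun x y => (x, y) ∈ l

instance {m : ℕ} (l : List (Fin m × Fin m)) : DecidableRel (edges l).Adj :=
  fun x y => inferInstanceAs (Decidable (x ≠ y ∧ ((x, y) ∈ l ∨ (y, x) ∈ l)))

/-- Inserting the gadget `H`, entered at `0` and left at `b`, raises `t` by `c`. The vertex `0` gets
degree `d`, so its edge to the old graph again has both ends of degree `d`. In `hc`, the sum over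
ordered pairs counts each edge of `H` twice, and the edge at `0` contributes nothing. -/
lemma Good.insert {d N : ℕ} {t : ℤ} (hg : Good d N t) {m : ℕ} (H : SimpleGraph (Fin (m + 1)))
    [DecidableRel H.Adj] (b : Fin (m + 1)) (c : ℤ) (D : Fin (m + 1) → ℤ)
    (hconn : ∀ w, w ≠ 0 → ∃ w' < w, H.Adj w w')
    (hD : ∀ w, D w = (∑ z, if H.Adj w z then 1 else 0)
      + (if w = 0 then 1 else 0) + (if w = b then 1 else 0))
    (h0 : D 0 = d)
    (hc : (∑ w, ∑ z, if H.Adj w z then |D w ^ 2 - D z ^ 2| else 0)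
      + 2 * |D b ^ 2 - d ^ 2| = 4 * c) :
    Good d (N + 1) (t + c) := by
  classical
  obtain ⟨V, _, G, u, v, hG, hN, hA, huv, hu, hv⟩ := hg
  have hD' : ∀ w, D w = H.degree w + (if w = 0 then 1 else 0) + (if w = b then 1 else 0) := by
    intro w
    rw [hD, degree_eq_sum]
  refine ⟨V ⊕ Fin (m + 1), inferInstance, splice G H u v 0 b, .inl u, .inr 0,
    splice_connected hG (connected_of_pred H hconn), ?_, ?_, Or.inl ⟨rfl, rfl⟩, ?_, ?_⟩
  · rw [Fintype.card_sum, Fintype.card_fin]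
    omega
  · have := modAlbertson_splice (H := H) (a := 0) (b := b) huv d
      (by rw [← hu]) (by rw [← hv]) D (by convert hD')
    rw [h0, sub_self, abs_zero, zero_add, hA] at this
    linarith
  · have := degree_splice_inl (H := H) (a := 0) (b := b) huv u
    rw [← hu]
    exact_mod_cast this
  · have := degree_splice_inr (H := H) (a := 0) (b := b) huv 0
    have h3 := hD' 0
    rw [h0] at h3
    zify
    rw [h3]
    convert this

/-- Starting graphs, with all conditions in a form that `decide` can check. -/
lemma good_of_edges {m d : ℕ} {t : ℤ} (G : SimpleGraph (Fin (m + 1))) [DecidableRel G.Adj]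
    (u v : Fin (m + 1)) (D : Fin (m + 1) → ℤ)
    (hconn : ∀ w, w ≠ 0 → ∃ w' < w, G.Adj w w')
    (hD : ∀ w, D w = ∑ z, if G.Adj w z then 1 else 0)
    (hu : D u = d) (hv : D v = d) (huv : G.Adj u v)
    (hc : (∑ w, ∑ z, if G.Adj w z then |D w ^ 2 - D z ^ 2| else 0) = 4 * t) :
    Good d 0 t := by
  have hD' : ∀ w, D w = G.degree w := fun w => by rw [hD, degree_eq_sum]
  refine ⟨_, inferInstance, G, u, v, connected_of_pred G hconn, by simp, ?_, huv, ?_, ?_⟩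
  · have := two_mul_modAlbertson G
    simp only [← hD'] at this
    linarith
  · rw [hD'] at hu
    zify
    convert hu
  · rw [hD'] at hv
    zify
    convert hv

/-! ### The gadgets and the values they reach -/

lemma good_two_three (N : ℕ) : Good 2 N 3 := by
  induction N with
  | zero =>
    exact good_of_edges (edges [(0, 1), (1, 2), (2, 3)] : SimpleGraph (Fin 4)) 1 2 ![1, 2, 2, 1]
      (by decide) (by decide) rfl rfl (by decide) (by decide)
  | succ N ih =>
    simpa using ih.insert (edges [] : SimpleGraph (Fin 1)) 0 0 ![2]
      (by decide) (by decide) rfl (by decide)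

lemma good_three_zero (N : ℕ) : Good 3 N 0 := by
  induction N with
  | zero =>
    exact good_of_edges (edges [(0, 1), (0, 2), (0, 3), (1, 2), (1, 3), (2, 3)] :
      SimpleGraph (Fin 4)) 0 1 ![3, 3, 3, 3]
      (by decide) (by decide) rfl rfl (by decide) (by decide)
  | succ N ih =>
    simpa using ih.insert (edges [(0, 1), (0, 2), (1, 2), (1, 3), (2, 3)] : SimpleGraph (Fin 4))
      3 0 ![3, 3, 3, 3] (by decide) (by decide) rfl (by decide)

lemma Good.mono {d N M : ℕ} {t : ℤ} (h : Good d N t) (hM : M ≤ N) : Good d M t := by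
  obtain ⟨V, i, G, u, v, hG, hN, h⟩ := h
  exact ⟨V, i, G, u, v, hG, hM.trans_lt hN, h⟩

/-- The gadget is a vertex carrying a pendant leaf: one edge between degrees `3` and `1`, `A*` grows
by `8`. -/
lemma Good.add_four {N : ℕ} {t : ℤ} (h : Good 3 N t) : Good 3 N (t + 4) :=
  (h.insert (edges [(0, 1)] : SimpleGraph (Fin 2)) 0 4 ![3, 1]
    (by decide) (by decide) rfl (by decide)).mono (by simp)

/-- The gadget is `K₄` minus the edge `03`, followed by a vertex of degree `2`, which has two
neighbours of degree `3`: `A*` grows by `5 + 5`. -/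
lemma Good.add_five {N : ℕ} {t : ℤ} (h : Good 3 N t) : Good 3 N (t + 5) :=
  (h.insert (edges [(0, 1), (0, 2), (1, 2), (1, 3), (2, 3), (3, 4)] : SimpleGraph (Fin 5))
    4 5 ![3, 3, 3, 3, 2] (by decide) (by decide) rfl (by decide)).mono (by simp)

/-- The gadget is a vertex carrying a leaf, followed by `K₅` minus the edge `26`: an edge between
degrees `3` and `1` and two between degrees `3` and `4`, so `A*` grows by `8 + 7 + 7`. -/
lemma Good.add_eleven {N : ℕ} {t : ℤ} (h : Good 3 N t) : Good 3 N (t + 11) :=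
  (h.insert (edges [(0, 1), (0, 2), (2, 3), (2, 4), (2, 5), (3, 4), (3, 5), (3, 6), (4, 5),
      (4, 6), (5, 6)] : SimpleGraph (Fin 7))
    6 11 ![3, 1, 4, 4, 4, 4, 4] (by decide) (by decide) rfl (by decide)).mono (by simp)

lemma good_three (N t : ℕ) (ht : t = 0 ∨ t = 4 ∨ t = 5 ∨ 8 ≤ t) : Good 3 N t := by
  induction t using Nat.strong_induction_on with
  | _ t ih =>
    by_cases h0 : t = 0
    · subst h0
      exact good_three_zero N
    -- Subtracting `4` leaves the admissible set exactly for `t = 0, 5, 10, 11`.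
    by_cases h5 : t = 5
    · subst h5
      exact (good_three_zero N).add_five
    by_cases h10 : t = 10
    · subst h10
      exact (good_three_zero N).add_five.add_five
    by_cases h11 : t = 11
    · subst h11
      exact (good_three_zero N).add_eleven
    obtain ⟨s, rfl⟩ : ∃ s, t = s + 4 := ⟨t - 4, by omega⟩
    exact_mod_cast (ih s (by omega) (by omega)).add_four

/-- For every `t ∈ {0, 3, 4, 5} ∪ {8, 9, 10, …}` there exist infinitely many
(pairwise non-isomorphic) finite connected simple graphs `G` with `A*(G) = 2t`:
for every bound `N` there is such a graph with more than `N` vertices. -/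
theorem modAlbertson_infinitely_many (t : ℕ)
    (ht : t = 0 ∨ t = 3 ∨ t = 4 ∨ t = 5 ∨ 8 ≤ t) (N : ℕ) :
    ∃ (V : Type) (_ : Fintype V) (G : SimpleGraph V),
      G.Connected ∧ N < Fintype.card V ∧ modAlbertson G = 2 * t := by
  have key : ∃ d, Good d N t := by
    by_cases h3 : t = 3
    · subst h3
      exact ⟨2, good_two_three N⟩
    · exact ⟨3, good_three N t (by omega)⟩
  obtain ⟨d, V, i, G, u, v, hG, hN, hA, -⟩ := key
  exact ⟨V, i, G, hG, hN, hA⟩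
end
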